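/- Let n ≥ 7, 1 ≤ k ≤ n − 3, and let G be a graph attaining the maximum Wiener index among all connected graphs on n vertices with exactly k cut vertices. Then every cut vertex of G lies in at most two pendant blocks. Furthermore, if k ≥ 2 and some cut vertex lies in two pendant blocks, then both of these pendant blocks are isomorphic to K₂. -/

import Mathlib

/-!
Let `S` be a set of vertices, none of them a cut vertex, attached to the rest of `G` only through
a vertex `w` (`Gated`), with at least one further vertex outside `S ∪ {w}`. Replacing the
subgraph on `S ∪ {w}` by a cycle leaves the set of cut vertices unchanged (`ringReplace_cut`), and
on a cycle of length `m` every vertex has transmission `⌊m²/4⌋` (`sum_cyc`). Distances between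
vertices outside `S` are not shortened (`ringDist_le`), and distances in `G` from `S` to the
outside are at most the sum through `w`, so the Wiener index increases as soon as the
distances from `w` to `S` and inside `S` are small enough (`exists_improvement`).

The private part of a pendant block at `w` is such a set: a vertex of a block having a neighbour
outside the block is a cut vertex, since otherwise the edge would extend to an ear and the block
would not be maximal (`IsBlock.mem_of_adj`). In a block of size `m` every transmission is at most
`⌊m²/4⌋`, as each sphere of positive radius below the eccentricity has at least two vertices
(`Bic.sum_dist_le`).

Take `S` to be the private part of two pendant blocks at `w` of sizes `a ≥ 3` and `b ≥ 2`. The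
bounds above and the inequality `gain_two` show that the replacement is an improvement unless the
two blocks exhaust `G` (`no_large_pair`). Hence two pendant blocks sharing a cut vertex are both
edges, provided some vertex lies in neither; for `k ≥ 2` a second cut vertex is such a vertex.
If three pendant blocks share `w`, each of them witnesses this for the other two, so all three
are edges, and then their leaves and `w` can be rearranged into a 4-cycle: this loses `1` among
these four vertices and gains `1` for each of the `n - 4 ≥ 3` others (`no_three_leaves`).
-/

open SimpleGraph

variable {V : Type*}

/-- The distance (transmission) of a vertex `v`: the sum of distances from `v`
to all other vertices. -/
noncomputable def vertexDistance [Fintype V] (G : SimpleGraph V) (v : V) : ℕ :=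
  ∑ u : V, G.dist v u

/-- The Wiener index: the sum of distances over all unordered pairs of vertices. -/
noncomputable def wienerIndex [Fintype V] (G : SimpleGraph V) : ℕ :=
  (∑ u : V, ∑ v : V, G.dist u v) / 2

/-- `v` is a cut vertex of `G` if deleting it leaves a disconnected
(or empty) graph. -/
def IsCutVertex (G : SimpleGraph V) (v : V) : Prop :=
  ¬ (G.induce ({v}ᶜ : Set V)).Connected

/-- The number of cut vertices of `G`. -/
noncomputable def cutVertexCount (G : SimpleGraph V) : ℕ :=
  {v : V | IsCutVertex G v}.ncard

/-- `B` is (the vertex set of) a block of `G`: a maximal connected subgraph on at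
least two vertices that has no cut vertex of its own. -/
def IsBlock (G : SimpleGraph V) (B : Set V) : Prop :=
  2 ≤ B.ncard ∧ (G.induce B).Connected ∧
    (∀ v : B, ¬ IsCutVertex (G.induce B) v) ∧
    ∀ C : Set V, B ⊆ C → (G.induce C).Connected →
      (∀ v : C, ¬ IsCutVertex (G.induce C) v) → C = B

/-- A pendant block: a block containing exactly one cut vertex of `G`. -/
def IsPendantBlock (G : SimpleGraph V) (B : Set V) : Prop :=
  IsBlock G B ∧ {v ∈ B | IsCutVertex G v}.ncard = 1

/-- An s-pendant block: a pendant block which shares its cut vertex with exactly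
one non-pendant block of `G`. -/
def IsSPendantBlock (G : SimpleGraph V) (B : Set V) : Prop :=
  IsPendantBlock G B ∧
    ∀ w ∈ B, IsCutVertex G w →
      {C : Set V | IsBlock G C ∧ ¬ IsPendantBlock G C ∧ w ∈ C}.ncard = 1

/-- The graph `L_{n,g}`: a cycle `C_g` on the vertices `0, …, g-1` (consecutive
edges together with the chord `{0, g-1}`) with the path `g-1, g, …, n-1`
attached at the vertex `g-1`.  For `g < n` its unique pendant vertex is `n-1`.
For `g = n` this is the cycle `C_n`. -/
def lollipop (n g : ℕ) : SimpleGraph (Fin n) :=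
  SimpleGraph.fromRel (fun i j =>
    (i : ℕ) + 1 = (j : ℕ) ∨ ((i : ℕ) = 0 ∧ (j : ℕ) = g - 1))

/-- The cycle `C_n` on `n` vertices. -/
def cycleG (n : ℕ) : SimpleGraph (Fin n) := lollipop n n

/-- The graph `C_{m₁,m₂}ⁿ`: a cycle `C_{m₁}` on `0, …, m₁-1`, a cycle `C_{m₂}`
on `n-m₂, …, n-1`, joined by the path `m₁-1, m₁, …, n-m₂` (which degenerates to
a single identified vertex when `n = m₁+m₂-1`). -/
def dumbbell (n m₁ m₂ : ℕ) : SimpleGraph (Fin n) :=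
  SimpleGraph.fromRel (fun i j =>
    (i : ℕ) + 1 = (j : ℕ) ∨ ((i : ℕ) = 0 ∧ (j : ℕ) = m₁ - 1)
      ∨ ((i : ℕ) = n - m₂ ∧ (j : ℕ) = n - 1))

/-- Identify the vertex `w` of `H` with the vertex `u` of `G`:  the resulting
graph on `U ⊕ {x : W // x ≠ w}` whose edges are those of `G`, those of `H` not
meeting `w`, and the edges of `H` at `w` re-attached at `u`. -/
def glue {U W : Type*} (G : SimpleGraph U) (u : U) (H : SimpleGraph W) (w : W) :
    SimpleGraph (U ⊕ {x : W // x ≠ w}) :=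
  SimpleGraph.fromRel (fun a b =>
    match a, b with
    | Sum.inl x, Sum.inl y => G.Adj x y
    | Sum.inl x, Sum.inr y => x = u ∧ H.Adj w y.val
    | Sum.inr x, Sum.inr y => H.Adj x.val y.val
    | _, _ => False)

/-! ### Connection inside a vertex set -/

/-- `a` and `b` are joined by a walk of `G` all of whose edges lie inside `S`. -/
def InConn (G : SimpleGraph V) (S : Set V) : V → V → Prop :=
  Relation.ReflTransGen (fun a b => G.Adj a b ∧ a ∈ S ∧ b ∈ S)

lemma InConn.symm {G : SimpleGraph V} {S : Set V} {a b : V} (h : InConn G S a b) :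
    InConn G S b a := by
  induction h with
  | refl => exact Relation.ReflTransGen.refl
  | tail _ h2 ih => exact Relation.ReflTransGen.head ⟨h2.1.symm, h2.2.2, h2.2.1⟩ ih

lemma InConn.trans {G : SimpleGraph V} {S : Set V} {a b c : V} (h : InConn G S a b)
    (h' : InConn G S b c) : InConn G S a c :=
  Relation.ReflTransGen.trans h h'

lemma InConn.mono {G : SimpleGraph V} {S S' : Set V} (hS : S ⊆ S') {a b : V}
    (h : InConn G S a b) : InConn G S' a b :=
  Relation.ReflTransGen.mono (fun _ _ h => ⟨h.1, hS h.2.1, hS h.2.2⟩) _ _ h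

lemma inConn_univ {G : SimpleGraph V} {a b : V} : InConn G Set.univ a b ↔ G.Reachable a b := by
  rw [SimpleGraph.reachable_iff_reflTransGen]
  simp [InConn]

lemma induce_connected_iff (G : SimpleGraph V) (S : Set V) :
    (G.induce S).Connected ↔ S.Nonempty ∧ ∀ a ∈ S, ∀ b ∈ S, InConn G S a b := by
  constructor
  · intro h
    obtain ⟨x⟩ := h.nonempty
    refine ⟨⟨x.1, x.2⟩, fun a ha b hb => ?_⟩
    have := (SimpleGraph.reachable_iff_reflTransGen _ _).1 (h.preconnected ⟨a, ha⟩ ⟨b, hb⟩)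
    exact Relation.ReflTransGen.lift (p := fun a b => G.Adj a b ∧ a ∈ S ∧ b ∈ S) Subtype.val
      (fun x y hxy => ⟨hxy, x.2, y.2⟩) _ _ this
  · rintro ⟨⟨x, hx⟩, h⟩
    have : Nonempty S := ⟨⟨x, hx⟩⟩
    refine ⟨fun ⟨a, ha⟩ ⟨b, hb⟩ => ?_⟩
    have key : ∀ b, InConn G S a b → ∀ hb : b ∈ S, (G.induce S).Reachable ⟨a, ha⟩ ⟨b, hb⟩ := by
      intro b hab
      induction hab with
      | refl => exact fun _ => SimpleGraph.Reachable.refl _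
      | tail _ h2 ih =>
        intro hc
        refine (ih h2.2.1).trans (SimpleGraph.Adj.reachable ?_)
        exact h2.1
    exact key b (h a ha b hb) hb

lemma inConn_induce (G : SimpleGraph V) (B : Set V) (v : B) (a b : V) (ha : a ∈ B) (hb : b ∈ B) :
    InConn (G.induce B) {v}ᶜ ⟨a, ha⟩ ⟨b, hb⟩ ↔ InConn G (B \ {v.1}) a b := by
  constructor
  · intro h
    refine Relation.ReflTransGen.lift
      (p := fun a b => G.Adj a b ∧ a ∈ B \ {v.1} ∧ b ∈ B \ {v.1}) Subtype.val ?_ _ _ h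
    rintro ⟨x, hx⟩ ⟨y, hy⟩ ⟨h1, h2, h3⟩
    refine ⟨h1, ⟨hx, ?_⟩, ⟨hy, ?_⟩⟩
    · rintro rfl; exact h2 rfl
    · rintro rfl; exact h3 rfl
  · intro h
    have key : ∀ b, InConn G (B \ {v.1}) a b → ∀ hb : b ∈ B,
        InConn (G.induce B) {v}ᶜ ⟨a, ha⟩ ⟨b, hb⟩ := by
      intro b hab
      induction hab with
      | refl => exact fun _ => Relation.ReflTransGen.refl
      | tail _ h2 ih =>
        intro hc
        refine Relation.ReflTransGen.tail (ih h2.2.1.1) ⟨h2.1, ?_, ?_⟩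
        · intro h; exact h2.2.1.2 (congrArg Subtype.val h)
        · intro h; exact h2.2.2.2 (congrArg Subtype.val h)
    exact key b h hb

lemma not_isCutVertex_iff (G : SimpleGraph V) (v : V) :
    ¬ IsCutVertex G v ↔ (∃ x, x ≠ v) ∧ ∀ a, a ≠ v → ∀ b, b ≠ v → InConn G {v}ᶜ a b := by
  unfold IsCutVertex
  rw [not_not, induce_connected_iff]
  rfl

lemma InConn.exists_walk {G : SimpleGraph V} {S : Set V} {a b : V} (h : InConn G S a b)
    (hb : b ∈ S) : ∃ p : G.Walk a b, ∀ z ∈ p.support, z ∈ S := by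
  induction h using Relation.ReflTransGen.head_induction_on with
  | refl => exact ⟨SimpleGraph.Walk.nil, by simpa using hb⟩
  | head h1 _ ih =>
    obtain ⟨p, hp⟩ := ih
    refine ⟨SimpleGraph.Walk.cons h1.1 p, ?_⟩
    intro z hz
    rw [SimpleGraph.Walk.support_cons, List.mem_cons] at hz
    rcases hz with rfl | hz
    · exact h1.2.1
    · exact hp z hz

lemma inConn_of_walk {G : SimpleGraph V} {S : Set V} {a b : V} (p : G.Walk a b)
    (hp : ∀ z ∈ p.support, z ∈ S) : InConn G S a b := by
  induction p with
  | nil => exact Relation.ReflTransGen.refl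
  | cons h p ih =>
    refine Relation.ReflTransGen.head ⟨h, hp _ (by simp), hp _ (by simp)⟩ (ih ?_)
    intro z hz
    exact hp z (by simp [hz])

/-! ### Biconnected sets and blocks -/

/-- `B` induces a connected subgraph that stays connected (or becomes empty) when any one of
its vertices is deleted. -/
def Bic (G : SimpleGraph V) (B : Set V) : Prop :=
  (∀ a ∈ B, ∀ b ∈ B, InConn G B a b) ∧
    ∀ v ∈ B, ∀ a ∈ B \ {v}, ∀ b ∈ B \ {v}, InConn G (B \ {v}) a b

lemma bic_of_induce {G : SimpleGraph V} {B : Set V} (hc : (G.induce B).Connected)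
    (hv : ∀ v : B, ¬ IsCutVertex (G.induce B) v) : Bic G B := by
  refine ⟨((induce_connected_iff G B).1 hc).2, fun v hvB a ha b hb => ?_⟩
  have := ((not_isCutVertex_iff _ _).1 (hv ⟨v, hvB⟩)).2
  refine (inConn_induce G B ⟨v, hvB⟩ a b ha.1 hb.1).1 (this _ ?_ _ ?_)
  · intro h; exact ha.2 (congrArg Subtype.val h)
  · intro h; exact hb.2 (congrArg Subtype.val h)

lemma induce_of_bic {G : SimpleGraph V} {B : Set V} (h : Bic G B) (hB : B.Nontrivial) :
    (G.induce B).Connected ∧ ∀ v : B, ¬ IsCutVertex (G.induce B) v := by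
  refine ⟨(induce_connected_iff G B).2 ⟨hB.nonempty, h.1⟩, fun v => ?_⟩
  rw [not_isCutVertex_iff]
  constructor
  · obtain ⟨x, hx, hxv⟩ := hB.exists_ne v.1
    exact ⟨⟨x, hx⟩, fun h => hxv (congrArg Subtype.val h)⟩
  · rintro ⟨a, ha⟩ hav ⟨b, hb⟩ hbv
    refine (inConn_induce G B v a b ha hb).2 (h.2 v.1 v.2 a ⟨ha, ?_⟩ b ⟨hb, ?_⟩)
    · rintro rfl; exact hav rfl
    · rintro rfl; exact hbv rfl

/-- Attaching an ear to a biconnected set keeps it biconnected. -/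
lemma Bic.ear {G : SimpleGraph V} {B : Set V} (h : Bic G B) {v y : V} (p : G.Walk v y)
    (hp : p.IsPath) (hv : v ∈ B) (hy : y ∈ B) : Bic G (B ∪ {z | z ∈ p.support}) := by
  classical
  set C : Set V := B ∪ {z | z ∈ p.support} with hC
  have hBC : B ⊆ C := Set.subset_union_left
  constructor
  · have key : ∀ z ∈ C, InConn G C z v := by
      rintro z (hz | hz)
      · exact (h.1 z hz v hv).mono hBC
      · refine (inConn_of_walk (p.takeUntil z hz) fun u hu => Or.inr ?_).symm
        exact p.support_takeUntil_subset_support hz hu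
    exact fun a ha b hb => (key a ha).trans (key b hb).symm
  · intro c _
    have hBc : ∀ a ∈ B \ {c}, ∀ b ∈ B \ {c}, InConn G (C \ {c}) a b := by
      intro a ha b hb
      by_cases hcB : c ∈ B
      · exact (h.2 c hcB a ha b hb).mono (Set.sdiff_subset_sdiff_left hBC)
      · have hsub : B ⊆ C \ {c} := fun u hu => ⟨hBC hu, by rintro rfl; exact hcB hu⟩
        exact (h.1 a ha.1 b hb.1).mono hsub
    have key : ∀ z ∈ C \ {c}, ∃ b ∈ B \ {c}, InConn G (C \ {c}) z b := by
      rintro z ⟨hz | hz, hzc⟩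
      · exact ⟨z, ⟨hz, hzc⟩, Relation.ReflTransGen.refl⟩
      · have hz' : z ∈ p.support := hz
        by_cases hct : c ∈ (p.takeUntil z hz').support
        · -- on a path, `c` cannot lie on both sides of `z`
          have hcd : c ∉ (p.dropUntil z hz').support := by
            intro hcd
            have hnd := hp.support_nodup
            rw [← p.take_spec hz', SimpleGraph.Walk.support_append] at hnd
            have hdis := (List.nodup_append'.1 hnd).2.2
            rw [SimpleGraph.Walk.mem_support_iff] at hcd
            rcases hcd with hcd | hcd
            · exact hzc hcd.symm
            · exact hdis hct hcd
          refine ⟨y, ⟨hy, ?_⟩, inConn_of_walk (p.dropUntil z hz') ?_⟩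
          · rintro rfl; exact hcd (SimpleGraph.Walk.end_mem_support _)
          · intro u hu
            refine ⟨Or.inr (p.support_dropUntil_subset_support hz' hu), ?_⟩
            rintro rfl; exact hcd hu
        · refine ⟨v, ⟨hv, ?_⟩, (inConn_of_walk (p.takeUntil z hz') ?_).symm⟩
          · rintro rfl; exact hct (SimpleGraph.Walk.start_mem_support _)
          · intro u hu
            refine ⟨Or.inr (p.support_takeUntil_subset_support hz' hu), ?_⟩
            rintro rfl; exact hct hu
    intro a ha b hb
    obtain ⟨a', ha', h1⟩ := key a ha
    obtain ⟨b', hb', h2⟩ := key b hb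
    exact (h1.trans (hBc a' ha' b' hb')).trans h2.symm

lemma IsBlock.bic {G : SimpleGraph V} {B : Set V} (h : IsBlock G B) : Bic G B :=
  bic_of_induce h.2.1 h.2.2.1

lemma IsBlock.nontrivial {G : SimpleGraph V} {B : Set V} (h : IsBlock G B) : B.Nontrivial := by
  have h2 := h.1
  exact (Set.one_lt_ncard_iff_nontrivial_and_finite.1 (by omega)).1

lemma IsBlock.eq_of_subset {G : SimpleGraph V} {B C : Set V} (h : IsBlock G B) (hC : Bic G C)
    (hBC : B ⊆ C) : C = B := by
  obtain ⟨h1, h2⟩ := induce_of_bic hC (h.nontrivial.mono hBC)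
  exact h.2.2.2 C hBC h1 h2

/-- A vertex of a block that is not a cut vertex has all its neighbours in that block: an edge
leaving the block would close up to an ear. -/
lemma IsBlock.mem_of_adj {G : SimpleGraph V} {B : Set V} (h : IsBlock G B) {v x : V}
    (hv : v ∈ B) (hcut : ¬ IsCutVertex G v) (hx : G.Adj v x) : x ∈ B := by
  classical
  obtain ⟨y, hy, hyv⟩ := h.nontrivial.exists_ne v
  obtain ⟨q, hq⟩ := (((not_isCutVertex_iff G v).1 hcut).2 x hx.ne' y hyv).exists_walk
    (show y ∈ ({v}ᶜ : Set V) from hyv)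
  have hp : (SimpleGraph.Walk.cons hx q.bypass).IsPath := by
    rw [SimpleGraph.Walk.cons_isPath_iff]
    exact ⟨q.bypass_isPath, fun hm => hq v (q.support_bypass_subset_support hm) rfl⟩
  rw [← h.eq_of_subset (h.bic.ear _ hp hv hy) Set.subset_union_left]
  exact Or.inr (by simp)

/-! ### Pendant blocks and gates -/

/-- The vertices of `S` are attached to the rest of the graph only through `w`. -/
def Gated (G : SimpleGraph V) (w : V) (S : Set V) : Prop :=
  w ∉ S ∧ ∀ x ∈ S, ∀ y, G.Adj x y → y ∈ S ∨ y = w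

lemma Gated.union {G : SimpleGraph V} {w : V} {S T : Set V} (hS : Gated G w S)
    (hT : Gated G w T) : Gated G w (S ∪ T) := by
  refine ⟨fun h => h.elim hS.1 hT.1, ?_⟩
  rintro x (hx | hx) y hxy
  · exact (hS.2 x hx y hxy).imp_left Or.inl
  · exact (hT.2 x hx y hxy).imp_left Or.inr

lemma IsPendantBlock.not_cut {G : SimpleGraph V} {B : Set V} (h : IsPendantBlock G B) {w v : V}
    (hw : w ∈ B) (hcw : IsCutVertex G w) (hv : v ∈ B) (hvw : v ≠ w) : ¬ IsCutVertex G v := by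
  intro hcv
  obtain ⟨a, ha⟩ := Set.ncard_eq_one.1 h.2
  have h1 : w ∈ ({a} : Set V) := ha ▸ ⟨hw, hcw⟩
  have h2 : v ∈ ({a} : Set V) := ha ▸ ⟨hv, hcv⟩
  exact hvw (h2.trans h1.symm)

lemma IsPendantBlock.gated {G : SimpleGraph V} {B : Set V} (h : IsPendantBlock G B) {w : V}
    (hw : w ∈ B) (hcw : IsCutVertex G w) : Gated G w (B \ {w}) := by
  refine ⟨fun h => h.2 rfl, fun x hx y hxy => ?_⟩
  have := h.1.mem_of_adj hx.1 (h.not_cut hw hcw hx.1 hx.2) hxy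
  by_cases hyw : y = w
  · exact Or.inr hyw
  · exact Or.inl ⟨this, hyw⟩

/-- Distinct pendant blocks at `w` meet only in `w`. -/
lemma IsPendantBlock.disjoint {G : SimpleGraph V} {B C : Set V} (hB : IsPendantBlock G B)
    (hC : IsPendantBlock G C) {w : V} (hwB : w ∈ B) (hwC : w ∈ C) (hcw : IsCutVertex G w)
    (hne : B ≠ C) : Disjoint (B \ {w}) (C \ {w}) := by
  rw [Set.disjoint_left]
  intro z hzB hzC
  have hg := hB.gated hwB hcw
  have hsub : C ⊆ B := by
    intro y hy
    by_cases hyw : y = w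
    · rw [hyw]; exact hwB
    have hcon := hC.1.bic.2 w hwC z hzC y ⟨hy, hyw⟩
    have : y ∈ B \ {w} := by
      clear hy hyw
      induction hcon with
      | refl => exact hzB
      | tail _ h2 ih => exact (hg.2 _ ih _ h2.1).resolve_right h2.2.2.2
    exact this.1
  exact hne (hC.1.eq_of_subset hB.1.bic hsub)

/-! ### Transmissions in biconnected sets -/

/-- A vertex of a biconnected set `B` of size `m` has at least two vertices of `B` at each
distance strictly between `0` and its eccentricity; hence at most `m + 1 - 2 i` vertices of `B`
are at distance `≥ i` from it. -/
lemma Bic.card_far_le [DecidableEq V] {G : SimpleGraph V} (hG : G.Connected) {B : Finset V}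
    (h : Bic G (B : Set V)) {v : V} (hv : v ∈ B) (i : ℕ) :
    (B.filter (fun u => i + 1 ≤ G.dist v u)).card ≤ B.card + 1 - 2 * (i + 1) := by
  -- a walk from `v` to a vertex at distance `> i` meets the sphere of radius `i`
  have ivt : ∀ (S : Set V) (u : V) (j : ℕ), InConn G S v u → u ∈ S → j ≤ G.dist v u →
      ∃ z ∈ S, G.dist v z = j := by
    intro S u j hcon
    induction hcon with
    | refl =>
      intro hu hj
      exact ⟨v, hu, by rw [SimpleGraph.dist_self] at hj ⊢; omega⟩
    | @tail b c _ h2 ih =>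
      intro hu hj
      by_cases hjb : j ≤ G.dist v b
      · exact ih h2.2.1 hjb
      · have := hG.dist_triangle (u := v) (v := b) (w := c)
        rw [SimpleGraph.dist_eq_one_iff_adj.2 h2.1] at this
        exact ⟨c, hu, by omega⟩
  induction i with
  | zero =>
    have : B.filter (fun u => 0 + 1 ≤ G.dist v u) ⊆ B.erase v := by
      intro u hu
      rw [Finset.mem_filter] at hu
      refine Finset.mem_erase.2 ⟨?_, hu.1⟩
      rintro rfl
      simp at hu
    have := Finset.card_le_card this
    rw [Finset.card_erase_of_mem hv] at this
    omega
  | succ i ih =>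
    by_cases hemp : (B.filter (fun u => i + 1 + 1 ≤ G.dist v u)) = ∅
    · rw [hemp]; simp
    obtain ⟨u, hu⟩ := Finset.nonempty_iff_ne_empty.2 hemp
    rw [Finset.mem_filter] at hu
    obtain ⟨z, hz, hzd⟩ := ivt B u (i + 1) (h.1 v hv u hu.1) hu.1 (by omega)
    have hzv : v ≠ z := by
      rintro rfl
      simp at hzd
    have hzu : u ≠ z := by
      rintro rfl
      omega
    obtain ⟨y, hy, hyd⟩ := ivt ((B : Set V) \ {z}) u (i + 1)
      (h.2 z hz v ⟨hv, hzv⟩ u ⟨hu.1, hzu⟩) ⟨hu.1, hzu⟩ (by omega)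
    have hsub : B.filter (fun u => i + 1 + 1 ≤ G.dist v u) ⊆
        ((B.filter (fun u => i + 1 ≤ G.dist v u)).erase z).erase y := by
      intro t ht
      rw [Finset.mem_filter] at ht
      refine Finset.mem_erase.2 ⟨?_, Finset.mem_erase.2 ⟨?_, Finset.mem_filter.2 ⟨ht.1, ?_⟩⟩⟩
      · rintro rfl; omega
      · rintro rfl; omega
      · omega
    have hc := Finset.card_le_card hsub
    rw [Finset.card_erase_of_mem, Finset.card_erase_of_mem] at hc
    · omega
    · exact Finset.mem_filter.2 ⟨hz, by omega⟩
    · exact Finset.mem_erase.2 ⟨hy.2, Finset.mem_filter.2 ⟨hy.1, by omega⟩⟩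

lemma sum_odd_gaps (m : ℕ) : ∑ i ∈ Finset.range m, (m + 1 - 2 * (i + 1)) = m * m / 4 := by
  induction m using Nat.twoStepInduction with
  | zero => rfl
  | one => rfl
  | more m ih _ =>
    rw [Finset.sum_range_succ', Finset.sum_range_succ]
    have : ∀ i ∈ Finset.range m, m + 2 + 1 - 2 * (i + 1 + 1) = m + 1 - 2 * (i + 1) := by
      intro i _; omega
    rw [Finset.sum_congr rfl this, ih]
    have : (m + 2) * (m + 2) = m * m + 4 * (m + 1) := by ring
    omega

/-- In a biconnected set of size `m`, every vertex has transmission at most `⌊m²/4⌋`, the value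
attained on the cycle `C_m`. -/
lemma Bic.sum_dist_le [DecidableEq V] {G : SimpleGraph V} (hG : G.Connected) {B : Finset V}
    (h : Bic G (B : Set V)) {v : V} (hv : v ∈ B) :
    ∑ u ∈ B, G.dist v u ≤ B.card * B.card / 4 := by
  have hfar := fun i => h.card_far_le hG hv i
  have hle : ∀ u ∈ B, G.dist v u ≤ B.card := by
    intro u hu
    by_contra hlt
    have h1 := hfar B.card
    have h2 : u ∈ B.filter (fun u => B.card + 1 ≤ G.dist v u) :=
      Finset.mem_filter.2 ⟨hu, by omega⟩
    have := Finset.card_pos.2 ⟨u, h2⟩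
    omega
  calc ∑ u ∈ B, G.dist v u
      = ∑ u ∈ B, ∑ i ∈ Finset.range B.card, (if i + 1 ≤ G.dist v u then 1 else 0) := by
        refine Finset.sum_congr rfl fun u hu => ?_
        rw [← Finset.card_filter]
        have : (Finset.range B.card).filter (fun i => i + 1 ≤ G.dist v u)
            = Finset.range (G.dist v u) := by
          ext i
          have := hle u hu
          simp only [Finset.mem_filter, Finset.mem_range]
          omega
        rw [this, Finset.card_range]
    _ = ∑ i ∈ Finset.range B.card, (B.filter (fun u => i + 1 ≤ G.dist v u)).card := by
        rw [Finset.sum_comm]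
        exact Finset.sum_congr rfl fun i _ => by rw [Finset.card_filter]
    _ ≤ ∑ i ∈ Finset.range B.card, (B.card + 1 - 2 * (i + 1)) :=
        Finset.sum_le_sum fun i _ => hfar i
    _ = _ := sum_odd_gaps _

/-! ### Distances on a cycle -/

/-- The distance between positions `i` and `j` on the cycle of length `m`. -/
def cyc (m i j : ℕ) : ℕ := min ((i - j) + (j - i)) (m - ((i - j) + (j - i)))

lemma sum_cyc_zero (m : ℕ) : ∑ j ∈ Finset.range m, cyc m 0 j = m * m / 4 := by
  induction m using Nat.twoStepInduction with
  | zero => rfl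
  | one => rfl
  | more m ih _ =>
    rw [Finset.sum_range_succ', Finset.sum_range_succ]
    have : ∀ i ∈ Finset.range m, cyc (m + 2) 0 (i + 1) = cyc m 0 i + 1 := by
      intro i hi
      have := Finset.mem_range.1 hi
      unfold cyc; omega
    rw [Finset.sum_congr rfl this, Finset.sum_add_distrib, ih, Finset.sum_const,
      Finset.card_range, smul_eq_mul]
    have : (m + 2) * (m + 2) = m * m + 4 * (m + 1) := by ring
    unfold cyc; omega

lemma sum_cyc (m i : ℕ) (hi : i < m) : ∑ j ∈ Finset.range m, cyc m i j = m * m / 4 := by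
  induction i with
  | zero => exact sum_cyc_zero m
  | succ i ih =>
    rw [← ih (by omega)]
    obtain ⟨m, rfl⟩ : ∃ l, m = l + 1 := ⟨m - 1, by omega⟩
    rw [Finset.sum_range_succ', Finset.sum_range_succ]
    congr 1
    · refine Finset.sum_congr rfl fun j _ => ?_
      unfold cyc; omega
    · unfold cyc; omega

/-- Replacing two blocks of sizes `a` and `b` that share a vertex by one cycle of length
`a + b - 1` raises the upper bound on the sum of distances over ordered pairs by at least `2`:
`t` counts the vertices outside the `a + b - 2` private vertices of the two blocks, and
`⌊x²/4⌋` is the largest transmission of a vertex in a block of size `x`. -/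
lemma gain_two (a b t : ℕ) (ha : 3 ≤ a) (hb : 2 ≤ b) (ht : 2 ≤ t) (hn : 9 ≤ a + b + t) :
    2 * t * (a * a / 4 + b * b / 4) + (a - 2) * (a * a / 4) + (b - 2) * (b * b / 4)
      + 2 * ((b - 1) * (a * a / 4) + (a - 1) * (b * b / 4)) + 2
      ≤ (2 * t + (a + b - 3)) * ((a + b - 1) * (a + b - 1) / 4) := by
  have hdiv : ∀ x y : ℕ, (x * x = 4 * y ∨ x * x = 4 * y + 1) → x * x / 4 = y := by
    intro x y h; omega
  obtain ⟨t, rfl⟩ : ∃ l, t = l + 2 := ⟨t - 2, by omega⟩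
  obtain ⟨p, hp⟩ : ∃ p, a = 2 * p + 3 ∨ a = 2 * p + 4 := ⟨(a - 3) / 2, by omega⟩
  obtain ⟨q, hq⟩ : ∃ q, b = 2 * q + 2 ∨ b = 2 * q + 3 := ⟨(b - 2) / 2, by omega⟩
  rcases hp with rfl | rfl <;> rcases hq with rfl | rfl
  · rw [hdiv (2 * p + 3) (p * p + 3 * p + 2) (by right; ring),
      hdiv (2 * q + 2) (q * q + 2 * q + 1) (by left; ring),
      hdiv (2 * p + 3 + (2 * q + 2) - 1) ((p + q + 2) ^ 2)
        (by left; rw [show 2 * p + 3 + (2 * q + 2) - 1 = 2 * (p + q + 2) by omega]; ring),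
      show 2 * p + 3 - 2 = 2 * p + 1 by omega, show 2 * q + 2 - 2 = 2 * q by omega,
      show 2 * p + 3 - 1 = 2 * p + 2 by omega, show 2 * q + 2 - 1 = 2 * q + 1 by omega,
      show 2 * p + 3 + (2 * q + 2) - 3 = 2 * p + 2 * q + 2 by omega]
    zify
    rw [← sub_nonneg]
    ring_nf
    positivity
  · rw [hdiv (2 * p + 3) (p * p + 3 * p + 2) (by right; ring),
      hdiv (2 * q + 3) (q * q + 3 * q + 2) (by right; ring),
      hdiv (2 * p + 3 + (2 * q + 3) - 1) ((p + q + 2) * (p + q + 3))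
        (by right; rw [show 2 * p + 3 + (2 * q + 3) - 1 = 2 * (p + q + 2) + 1 by omega]; ring),
      show 2 * p + 3 - 2 = 2 * p + 1 by omega, show 2 * q + 3 - 2 = 2 * q + 1 by omega,
      show 2 * p + 3 - 1 = 2 * p + 2 by omega, show 2 * q + 3 - 1 = 2 * q + 2 by omega,
      show 2 * p + 3 + (2 * q + 3) - 3 = 2 * p + 2 * q + 3 by omega]
    zify
    rw [← sub_nonneg]
    ring_nf
    positivity
  · rw [hdiv (2 * p + 4) ((p + 2) ^ 2) (by left; ring),
      hdiv (2 * q + 2) (q * q + 2 * q + 1) (by left; ring),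
      hdiv (2 * p + 4 + (2 * q + 2) - 1) ((p + q + 2) * (p + q + 3))
        (by right; rw [show 2 * p + 4 + (2 * q + 2) - 1 = 2 * (p + q + 2) + 1 by omega]; ring),
      show 2 * p + 4 - 2 = 2 * p + 2 by omega, show 2 * q + 2 - 2 = 2 * q by omega,
      show 2 * p + 4 - 1 = 2 * p + 3 by omega, show 2 * q + 2 - 1 = 2 * q + 1 by omega,
      show 2 * p + 4 + (2 * q + 2) - 3 = 2 * p + 2 * q + 3 by omega]
    zify
    rw [← sub_nonneg]
    ring_nf
    have h1 : (0 : ℤ) ≤ t * p * 2 + t * p * q * 4 + t * q * 6 + p * q * 10 + p * q ^ 2 * 2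
        + p ^ 2 + p ^ 2 * q * 2 + q ^ 2 * 3 := by positivity
    -- for `p = q = 0`, a 4-cycle with a pendant edge, the bound `9 ≤ a + b + t` is essential
    have h2 : (1 : ℤ) ≤ t + p + q := by omega
    linarith
  · rw [hdiv (2 * p + 4) ((p + 2) ^ 2) (by left; ring),
      hdiv (2 * q + 3) (q * q + 3 * q + 2) (by right; ring),
      hdiv (2 * p + 4 + (2 * q + 3) - 1) ((p + q + 3) ^ 2)
        (by left; rw [show 2 * p + 4 + (2 * q + 3) - 1 = 2 * (p + q + 3) by omega]; ring),
      show 2 * p + 4 - 2 = 2 * p + 2 by omega, show 2 * q + 3 - 2 = 2 * q + 1 by omega,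
      show 2 * p + 4 - 1 = 2 * p + 3 by omega, show 2 * q + 3 - 1 = 2 * q + 2 by omega,
      show 2 * p + 4 + (2 * q + 3) - 3 = 2 * p + 2 * q + 4 by omega]
    zify
    rw [← sub_nonneg]
    ring_nf
    positivity

/-! ### Replacing what lies behind a gate by a cycle -/

lemma isCutVertex_of_gated {G : SimpleGraph V} {w : V} {S : Set V} (hg : Gated G w S)
    (hne : S.Nonempty) {z : V} (hz : z ∉ S) (hzw : z ≠ w) : IsCutVertex G w := by
  by_contra h
  obtain ⟨s, hs⟩ := hne
  have hcon := ((not_isCutVertex_iff G w).1 h).2 s (by rintro rfl; exact hg.1 hs) z hzw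
  have : z ∈ S := by
    clear hz hzw
    induction hcon with
    | refl => exact hs
    | tail _ h2 ih => exact (hg.2 _ ih _ h2.1).resolve_right h2.2.2
  exact hz this

/-- Outside a gated set, connections to the gate survive any change made behind the gate. -/
lemma InConn.transfer {G H : SimpleGraph V} {w : V} {S U : Set V} (hg : Gated G w S)
    (hGH : ∀ x ∉ S, ∀ y ∉ S, G.Adj x y → H.Adj x y) {a : V} (h : InConn G U a w) (ha : a ∉ S) :
    InConn H U a w := by
  induction h using Relation.ReflTransGen.head_induction_on with
  | refl => exact Relation.ReflTransGen.refl
  | @head a c h1 _ ih =>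
    by_cases haw : a = w
    · rw [haw]; exact Relation.ReflTransGen.refl
    have hc : c ∉ S := fun hc => (hg.2 c hc a h1.1.symm).elim ha haw
    exact Relation.ReflTransGen.head ⟨hGH a ha c hc h1.1, h1.2⟩ (ih hc)

lemma inConn_of_forall_gate {H : SimpleGraph V} {w : V} {U : Set V}
    (h : ∀ a ∈ U, InConn H U a w) : ∀ a ∈ U, ∀ b ∈ U, InConn H U a b :=
  fun a ha b hb => (h a ha).trans (h b hb).symm

/-- Whether a vertex beyond the gate is a cut vertex does not depend on what is behind the
gate. -/
lemma not_isCutVertex_transfer {G H : SimpleGraph V} (hH : H.Connected) {w : V} {S : Set V}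
    (hg : Gated G w S) (hg' : Gated H w S)
    (hGH : ∀ x ∉ S, ∀ y ∉ S, G.Adj x y → H.Adj x y) {v : V} (hv : v ∉ S) (hvw : v ≠ w)
    (h : ¬ IsCutVertex G v) : ¬ IsCutVertex H v := by
  rw [not_isCutVertex_iff] at h ⊢
  refine ⟨h.1, inConn_of_forall_gate (U := {v}ᶜ) (w := w) fun a ha => ?_⟩
  by_cases haS : a ∈ S
  · have hcon : InConn H Set.univ a w := inConn_univ.2 (hH.preconnected a w)
    clear ha
    induction hcon using Relation.ReflTransGen.head_induction_on with
    | refl => exact Relation.ReflTransGen.refl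
    | @head a c h1 _ ih =>
      have hav : a ≠ v := by rintro rfl; exact hv haS
      rcases hg'.2 a haS c h1.1 with hc | rfl
      · exact Relation.ReflTransGen.head ⟨h1.1, hav, by rintro rfl; exact hv hc⟩ (ih hc)
      · exact Relation.ReflTransGen.single ⟨h1.1, hav, hvw.symm⟩
  · exact InConn.transfer hg hGH (h.2 a ha w hvw.symm) haS

/-- The graph obtained from `G` by discarding the edges meeting the vertices of nonzero index
and laying a cycle of length `m` through these vertices and `w`, in the order of the indices. -/
def ringReplace (G : SimpleGraph V) (w : V) (m : ℕ) (idx : V → ℕ) : SimpleGraph V where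
  Adj x y := (idx x = 0 ∧ idx y = 0 ∧ G.Adj x y) ∨
    (x ≠ y ∧ (idx x = 0 → x = w) ∧ (idx y = 0 → y = w) ∧
      (idx x + 1 = idx y ∨ idx y + 1 = idx x ∨
        (idx x = 0 ∧ idx y + 1 = m) ∨ (idx y = 0 ∧ idx x + 1 = m)))
  symm := ⟨by
    rintro x y (⟨h1, h2, h3⟩ | ⟨h1, h2, h3, h4⟩)
    · exact Or.inl ⟨h2, h1, h3.symm⟩
    · exact Or.inr ⟨h1.symm, h3, h2, by tauto⟩⟩
  loopless := ⟨by
    rintro x (⟨h1, h2, h3⟩ | ⟨h1, _⟩)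
    · exact G.loopless.irrefl _ h3
    · exact h1 rfl⟩

/-- The vertices of nonzero index are numbered `1, …, m - 1`, and `w` has index `0`. -/
structure IsNumbering (w : V) (m : ℕ) (idx : V → ℕ) : Prop where
  zero : idx w = 0
  lt : ∀ x, idx x < m
  inj : ∀ x y, idx x ≠ 0 → idx x = idx y → x = y
  surj : ∀ i < m, i ≠ 0 → ∃ x, idx x = i

lemma IsNumbering.surj' {w : V} {m : ℕ} {idx : V → ℕ} (h : IsNumbering w m idx) (i : ℕ)
    (hi : i < m) : ∃ x, idx x = i ∧ (idx x = 0 → x = w) := by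
  by_cases h0 : i = 0
  · exact ⟨w, by rw [h.zero, h0], fun _ => rfl⟩
  · obtain ⟨x, hx⟩ := h.surj i hi h0
    exact ⟨x, hx, fun h' => absurd (hx ▸ h') h0⟩

/-- One can walk down the cycle to `w`. -/
lemma IsNumbering.descend {G : SimpleGraph V} {w : V} {m : ℕ} {idx : V → ℕ}
    (h : IsNumbering w m idx) (U : Set V) (i : ℕ) : ∀ x, idx x = i → (idx x = 0 → x = w) →
    (∀ y, idx y ≤ i → (idx y = 0 → y = w) → y ∈ U) →
    InConn (ringReplace G w m idx) U x w := by
  induction i with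
  | zero =>
    intro x hx hxw _
    rw [hxw hx]; exact Relation.ReflTransGen.refl
  | succ i ih =>
    intro x hx hxw hU
    obtain ⟨y, hy, hyw⟩ := h.surj' i (by have := h.lt x; omega)
    refine Relation.ReflTransGen.head ⟨Or.inr ⟨?_, hxw, hyw, ?_⟩, hU x (by omega) hxw,
      hU y (by omega) hyw⟩ (ih y hy hyw fun z hz => hU z (by omega))
    · rintro rfl; omega
    · omega

/-- One can walk up the cycle to `w`. -/
lemma IsNumbering.ascend {G : SimpleGraph V} {w : V} {m : ℕ} {idx : V → ℕ}
    (h : IsNumbering w m idx) (U : Set V) (hw : w ∈ U) (k : ℕ) : ∀ x, idx x + k + 1 = m →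
    idx x ≠ 0 → (∀ y, idx x ≤ idx y → y ∈ U) →
    InConn (ringReplace G w m idx) U x w := by
  induction k with
  | zero =>
    intro x hx hx0 hU
    refine Relation.ReflTransGen.single ⟨Or.inr ⟨?_, fun h => absurd h hx0, fun _ => rfl, ?_⟩,
      hU x le_rfl, hw⟩
    · rintro rfl; exact hx0 h.zero
    · have := h.zero; omega
  | succ k ih =>
    intro x hx hx0 hU
    obtain ⟨y, hy⟩ := h.surj (idx x + 1) (by omega) (by omega)
    refine Relation.ReflTransGen.head ⟨Or.inr ⟨?_, fun h => absurd h hx0, fun h => by omega, ?_⟩,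
      hU x le_rfl, hU y (by omega)⟩ (ih y (by omega) (by omega) fun z hz => hU z (by omega))
    · rintro rfl; omega
    · omega

lemma ringReplace_gated {G : SimpleGraph V} {w : V} {m : ℕ} {idx : V → ℕ}
    (h : IsNumbering w m idx) : Gated (ringReplace G w m idx) w {x | idx x ≠ 0} := by
  refine ⟨fun hw => hw h.zero, ?_⟩
  rintro x hx y (⟨h1, _⟩ | ⟨_, _, h3, _⟩)
  · exact absurd h1 hx
  · by_cases h0 : idx y = 0
    · exact Or.inr (h3 h0)
    · exact Or.inl h0

lemma ringReplace_adj_of {G : SimpleGraph V} {w : V} {m : ℕ} {idx : V → ℕ} :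
    ∀ x ∉ {x | idx x ≠ 0}, ∀ y ∉ {x | idx x ≠ 0}, G.Adj x y →
      (ringReplace G w m idx).Adj x y :=
  fun _ hx _ hy hxy => Or.inl ⟨not_not.1 hx, not_not.1 hy, hxy⟩

lemma adj_of_ringReplace {G : SimpleGraph V} {w : V} {m : ℕ} {idx : V → ℕ} :
    ∀ x ∉ {x | idx x ≠ 0}, ∀ y ∉ {x | idx x ≠ 0}, (ringReplace G w m idx).Adj x y →
      G.Adj x y := by
  rintro x hx y hy (⟨_, _, h⟩ | ⟨h1, h2, h3, _⟩)
  · exact h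
  · exact absurd ((h2 (not_not.1 hx)).trans (h3 (not_not.1 hy)).symm) h1

lemma ringReplace_connected {G : SimpleGraph V} (hG : G.Connected) {w : V} {m : ℕ}
    {idx : V → ℕ} (h : IsNumbering w m idx) (hg : Gated G w {x | idx x ≠ 0}) :
    (ringReplace G w m idx).Connected := by
  have : Nonempty V := ⟨w⟩
  refine ⟨fun a b => inConn_univ.1 ?_⟩
  refine inConn_of_forall_gate (U := Set.univ) (w := w) (fun a _ => ?_) a trivial b trivial
  by_cases ha : idx a = 0
  · exact InConn.transfer hg ringReplace_adj_of (inConn_univ.2 (hG.preconnected a w))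
      (fun h => h ha)
  · exact h.descend Set.univ _ a rfl (fun h => absurd h ha) fun _ _ _ => trivial

/-- Laying a cycle behind a gate does not change the cut vertices, provided that none of the
vertices behind the gate was one. -/
lemma ringReplace_cut {G : SimpleGraph V} (hG : G.Connected) {w : V} {m : ℕ} (hm : 2 ≤ m)
    {idx : V → ℕ} (h : IsNumbering w m idx) (hg : Gated G w {x | idx x ≠ 0})
    (hnc : ∀ x, idx x ≠ 0 → ¬ IsCutVertex G x) {z : V} (hz : idx z = 0) (hzw : z ≠ w) (v : V) :
    IsCutVertex (ringReplace G w m idx) v ↔ IsCutVertex G v := by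
  have hH := ringReplace_connected hG h hg
  have hg' := ringReplace_gated (G := G) h
  by_cases hv : idx v = 0
  · by_cases hvw : v = w
    · subst hvw
      obtain ⟨x, hx⟩ := h.surj 1 (by omega) (by omega)
      have hne : Set.Nonempty {x | idx x ≠ 0} := ⟨x, by simp [hx]⟩
      exact iff_of_true (isCutVertex_of_gated hg' hne (fun h => h hz) hzw)
        (isCutVertex_of_gated hg hne (fun h => h hz) hzw)
    · rw [← not_iff_not]
      exact ⟨not_isCutVertex_transfer hG hg' hg adj_of_ringReplace (fun h => h hv) hvw,
        not_isCutVertex_transfer hH hg hg' ringReplace_adj_of (fun h => h hv) hvw⟩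
  · have hwv : w ≠ v := by rintro rfl; exact hv h.zero
    have hGv := hnc v hv
    refine iff_of_false ?_ hGv
    rw [not_isCutVertex_iff] at hGv ⊢
    refine ⟨hGv.1, inConn_of_forall_gate (U := {v}ᶜ) (w := w) fun a ha => ?_⟩
    by_cases ha0 : idx a = 0
    · exact InConn.transfer hg ringReplace_adj_of (hGv.2 a ha w hwv) (fun h => h ha0)
    · have hne : idx a ≠ idx v := fun he => ha (h.inj _ _ ha0 he)
      rcases lt_or_gt_of_ne hne with hlt | hlt
      · refine h.descend _ _ a rfl (fun h => absurd h ha0) fun y hy _ => ?_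
        rintro rfl; omega
      · refine h.ascend _ hwv (m - 1 - idx a) a (by have := h.lt a; omega) ha0 fun y hy => ?_
        rintro rfl; omega

/-! ### Distances after the replacement -/

/-- A function growing by at most one along edges bounds distances from below. -/
lemma le_dist_of_lipschitz {H : SimpleGraph V} (hH : H.Connected) (φ : V → ℕ)
    (hφ : ∀ x y, H.Adj x y → φ y ≤ φ x + 1) (x y : V) : φ y ≤ φ x + H.dist x y := by
  obtain ⟨p, hp⟩ := hH.exists_walk_length_eq_dist x y
  rw [← hp]
  clear hp
  induction p with
  | nil => simp
  | cons h p ih =>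
    have := hφ _ _ h
    rw [SimpleGraph.Walk.length_cons]
    omega

/-- The distances in `ringReplace G w m idx`: those of `G` outside the cycle, cyclic distances
on the cycle, and sums through `w` otherwise. -/
noncomputable def ringDist (G : SimpleGraph V) (w : V) (m : ℕ) (idx : V → ℕ) (x y : V) : ℕ :=
  if idx x = 0 ∧ idx y = 0 then G.dist x y
  else (if idx x = 0 then G.dist x w else 0) + cyc m (idx x) (idx y)
    + (if idx y = 0 then G.dist w y else 0)

lemma ringDist_le {G : SimpleGraph V} (hG : G.Connected) {w : V} {m : ℕ}
    {idx : V → ℕ} (h : IsNumbering w m idx) (hg : Gated G w {x | idx x ≠ 0}) (x y : V) :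
    ringDist G w m idx x y ≤ (ringReplace G w m idx).dist x y := by
  have hself : ringDist G w m idx x x = 0 := by
    unfold ringDist
    split_ifs with h1 h2
    · simp
    · exact absurd ⟨h2, h2⟩ h1
    · simp [cyc]
  have := le_dist_of_lipschitz (ringReplace_connected hG h hg) (ringDist G w m idx x) ?_ x y
  · omega
  rintro a b (⟨ha, hb, hab⟩ | ⟨_, ha, hb, hab⟩)
  · have h1 := SimpleGraph.dist_eq_one_iff_adj.2 hab
    have h2 := hG.dist_triangle (u := x) (v := a) (w := b)
    have h3 := hG.dist_triangle (u := w) (v := a) (w := b)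
    unfold ringDist
    rw [ha, hb]
    simp only [and_true, if_true]
    split_ifs <;> omega
  · have hla := h.lt a
    have hlb := h.lt b
    have hlx := h.lt x
    unfold ringDist cyc
    by_cases hx0 : idx x = 0
    · by_cases ha0 : idx a = 0
      · by_cases hb0 : idx b = 0
        · rw [ha ha0, hb hb0]; omega
        · rw [ha ha0]; simp [hx0, hb0, h.zero]; omega
      · by_cases hb0 : idx b = 0
        · rw [hb hb0]; simp [hx0, ha0, h.zero]; omega
        · simp [hx0, ha0, hb0]; omega
    · by_cases ha0 : idx a = 0
      · by_cases hb0 : idx b = 0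
        · rw [ha ha0, hb hb0]; omega
        · rw [ha ha0]; simp [hx0, hb0, h.zero]; omega
      · by_cases hb0 : idx b = 0
        · rw [hb hb0]; simp [hx0, ha0, h.zero]; omega
        · simp [hx0, ha0, hb0]; omega

/-! ### The change of the Wiener index -/

lemma exists_numbering [DecidableEq V] (S : Finset V) {w : V} (hw : w ∉ S) :
    ∃ idx : V → ℕ, IsNumbering w (S.card + 1) idx ∧ ∀ x, idx x ≠ 0 ↔ x ∈ S := by
  refine ⟨fun x => if h : x ∈ S then (S.equivFin ⟨x, h⟩).val + 1 else 0, ⟨?_, ?_, ?_, ?_⟩, ?_⟩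
  · simp [hw]
  · intro x
    split_ifs with h
    · have := (S.equivFin ⟨x, h⟩).2; omega
    · omega
  · intro x y hx hxy
    split_ifs at hx hxy with h1 h2
    · have := S.equivFin.injective (Fin.ext (Nat.succ_injective hxy))
      exact congrArg Subtype.val this
    · exact absurd rfl hx
  · intro i hi hi0
    refine ⟨(S.equivFin.symm ⟨i - 1, by omega⟩).1, ?_⟩
    simp
    omega
  · intro x
    dsimp only
    split_ifs with h <;> simp [h]

lemma sum_sum_split [Fintype V] [DecidableEq V] (S : Finset V) (F : V → V → ℕ) :
    ∑ x, ∑ y, F x y = ∑ x ∈ Sᶜ, ∑ y ∈ Sᶜ, F x y + ∑ x ∈ Sᶜ, ∑ y ∈ S, F x y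
      + (∑ x ∈ S, ∑ y ∈ Sᶜ, F x y + ∑ x ∈ S, ∑ y ∈ S, F x y) := by
  have h : ∀ f : V → ℕ, ∑ x, f x = ∑ x ∈ Sᶜ, f x + ∑ x ∈ S, f x :=
    fun f => (Finset.sum_compl_add_sum S f).symm
  rw [h]
  congr 1 <;> rw [← Finset.sum_add_distrib] <;> exact Finset.sum_congr rfl fun x _ => h _

lemma IsNumbering.sum_eq [DecidableEq V] {S : Finset V} {w : V} {m : ℕ} {idx : V → ℕ}
    (h : IsNumbering w m idx) (hS : ∀ x, idx x ≠ 0 ↔ x ∈ S) (hm : 1 ≤ m) (g : ℕ → ℕ) :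
    ∑ x ∈ S, g (idx x) + g 0 = ∑ j ∈ Finset.range m, g j := by
  have himg : S.image idx = (Finset.range m).erase 0 := by
    ext i
    simp only [Finset.mem_image, Finset.mem_erase, Finset.mem_range]
    constructor
    · rintro ⟨x, hx, rfl⟩
      exact ⟨(hS x).2 hx, h.lt x⟩
    · rintro ⟨h0, hi⟩
      obtain ⟨x, rfl⟩ := h.surj i hi h0
      exact ⟨x, (hS x).1 h0, rfl⟩
  rw [← Finset.sum_image (s := S) (f := g) (g := idx)
    (fun x hx y _ hxy => h.inj x y ((hS x).2 hx) hxy), himg,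
    Finset.sum_erase_add _ _ (Finset.mem_range.2 hm)]

lemma cyc_comm (m i j : ℕ) : cyc m i j = cyc m j i := by unfold cyc; omega

/-- If the vertices behind a gate are close enough to the gate and to each other, laying a cycle
through them and the gate increases the Wiener index without changing the cut vertices. The gap
of `2` in the numerical hypothesis absorbs the rounding in the definition of `wienerIndex`. -/
lemma exists_improvement [Fintype V] [DecidableEq V] {G : SimpleGraph V} (hG : G.Connected)
    {w : V} {S : Finset V} (hg : Gated G w (S : Set V)) (hS : 1 ≤ S.card)
    (hnc : ∀ x ∈ S, ¬ IsCutVertex G x) {z : V} (hz : z ∉ S) (hzw : z ≠ w)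
    (hnum : 2 * Sᶜ.card * ∑ y ∈ S, G.dist w y + ∑ x ∈ S, ∑ y ∈ S, G.dist x y + 2
      ≤ (2 * Sᶜ.card + (S.card - 1)) * ((S.card + 1) * (S.card + 1) / 4)) :
    ∃ H : SimpleGraph V, H.Connected ∧ cutVertexCount H = cutVertexCount G ∧
      wienerIndex G < wienerIndex H := by
  obtain ⟨idx, h, hidx⟩ := exists_numbering S (w := w) hg.1
  have hset : {x | idx x ≠ 0} = (S : Set V) := Set.ext fun x => hidx x
  have hg' : Gated G w {x | idx x ≠ 0} := by rw [hset]; exact hg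
  have hidx0 : ∀ x, x ∈ Sᶜ → idx x = 0 := fun x hx => by
    by_contra h0
    exact Finset.mem_compl.1 hx ((hidx x).1 h0)
  set m := S.card + 1 with hm
  refine ⟨ringReplace G w m idx, ringReplace_connected hG h hg', ?_, ?_⟩
  · unfold cutVertexCount
    congr 1
    ext v
    exact ringReplace_cut hG (by omega) h hg' (fun x hx => hnc x ((hidx x).1 hx))
      (hidx0 z (Finset.mem_compl.2 hz)) hzw v
  · have hlow : ∑ x, ∑ y, ringDist G w m idx x y
        ≤ ∑ x, ∑ y, (ringReplace G w m idx).dist x y :=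
      Finset.sum_le_sum fun x _ => Finset.sum_le_sum fun y _ => ringDist_le hG h hg' x y
    have hf0 : ∑ y ∈ S, cyc m 0 (idx y) = m * m / 4 := by
      have := h.sum_eq hidx (by omega) (cyc m 0)
      rw [sum_cyc m 0 (by omega)] at this
      have h0 : cyc m 0 0 = 0 := by unfold cyc; omega
      omega
    have hSS : ∑ x ∈ S, ∑ y ∈ S, ringDist G w m idx x y = (S.card - 1) * (m * m / 4) := by
      have h1 : ∀ x ∈ S, ∑ y ∈ S, ringDist G w m idx x y + cyc m 0 (idx x) = m * m / 4 := by
        intro x hx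
        rw [← sum_cyc m (idx x) (h.lt x), ← h.sum_eq hidx (by omega) (cyc m (idx x)),
          cyc_comm m 0]
        congr 1
        refine Finset.sum_congr rfl fun y hy => ?_
        have := (hidx x).2 hx
        have := (hidx y).2 hy
        unfold ringDist
        split_ifs <;> omega
      have h2 := Finset.sum_congr (rfl : S = S) h1
      rw [Finset.sum_add_distrib, hf0, Finset.sum_const, smul_eq_mul] at h2
      rw [Nat.sub_mul]
      omega
    have hTT : ∑ x ∈ Sᶜ, ∑ y ∈ Sᶜ, ringDist G w m idx x y
        = ∑ x ∈ Sᶜ, ∑ y ∈ Sᶜ, G.dist x y :=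
      Finset.sum_congr rfl fun x hx => Finset.sum_congr rfl fun y hy => by
        unfold ringDist
        rw [if_pos ⟨hidx0 x hx, hidx0 y hy⟩]
    have hTS : ∑ x ∈ Sᶜ, ∑ y ∈ S, ringDist G w m idx x y
        = S.card * ∑ x ∈ Sᶜ, G.dist x w + Sᶜ.card * (m * m / 4) := by
      rw [Finset.mul_sum, ← smul_eq_mul, ← Finset.sum_const, ← Finset.sum_add_distrib]
      refine Finset.sum_congr rfl fun x hx => ?_
      rw [← hf0, ← smul_eq_mul, ← Finset.sum_const, ← Finset.sum_add_distrib]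
      refine Finset.sum_congr rfl fun y hy => ?_
      have := (hidx y).2 hy
      unfold ringDist
      simp [hidx0 x hx, this]
    have hST : ∑ x ∈ S, ∑ y ∈ Sᶜ, ringDist G w m idx x y
        = ∑ x ∈ Sᶜ, ∑ y ∈ S, ringDist G w m idx x y := by
      rw [Finset.sum_comm]
      refine Finset.sum_congr rfl fun x hx => Finset.sum_congr rfl fun y hy => ?_
      have := (hidx y).2 hy
      unfold ringDist
      simp [hidx0 x hx, this, cyc_comm m (idx y) 0, SimpleGraph.dist_comm]
      omega
    have hTS' : ∑ x ∈ Sᶜ, ∑ y ∈ S, G.dist x y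
        ≤ S.card * ∑ x ∈ Sᶜ, G.dist x w + Sᶜ.card * ∑ y ∈ S, G.dist w y := by
      rw [Finset.mul_sum, ← smul_eq_mul (a := Sᶜ.card), ← Finset.sum_const,
        ← Finset.sum_add_distrib]
      refine Finset.sum_le_sum fun x _ => ?_
      rw [← smul_eq_mul, ← Finset.sum_const, ← Finset.sum_add_distrib]
      exact Finset.sum_le_sum fun y _ => hG.dist_triangle
    have hST' : ∑ x ∈ S, ∑ y ∈ Sᶜ, G.dist x y = ∑ x ∈ Sᶜ, ∑ y ∈ S, G.dist x y := by
      rw [Finset.sum_comm]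
      exact Finset.sum_congr rfl fun x _ => Finset.sum_congr rfl fun y _ =>
        SimpleGraph.dist_comm
    have hGs := sum_sum_split S (fun x y => G.dist x y)
    rw [sum_sum_split S (ringDist G w m idx), hST, hTS, hSS, hTT] at hlow
    rw [hST'] at hGs
    have e1 : 2 * Sᶜ.card * ∑ y ∈ S, G.dist w y = 2 * (Sᶜ.card * ∑ y ∈ S, G.dist w y) := by
      ring
    have e2 : (2 * Sᶜ.card + (S.card - 1)) * (m * m / 4)
        = 2 * (Sᶜ.card * (m * m / 4)) + (S.card - 1) * (m * m / 4) := by ring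
    rw [e1, e2] at hnum
    unfold wienerIndex
    omega

/-- Distances inside `S ∪ T`, when paths between `S` and `T` may be routed through `w`. -/
lemma sum_dist_union_le [DecidableEq V] {G : SimpleGraph V} (hG : G.Connected) (w : V)
    {S T : Finset V} (hST : Disjoint S T) :
    ∑ x ∈ S ∪ T, ∑ y ∈ S ∪ T, G.dist x y ≤
      ∑ x ∈ S, ∑ y ∈ S, G.dist x y + ∑ x ∈ T, ∑ y ∈ T, G.dist x y
        + 2 * (T.card * ∑ x ∈ S, G.dist w x + S.card * ∑ y ∈ T, G.dist w y) := by
  have hx : ∑ x ∈ S, ∑ y ∈ T, G.dist x y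
      ≤ T.card * ∑ x ∈ S, G.dist w x + S.card * ∑ y ∈ T, G.dist w y := by
    rw [Finset.mul_sum, ← smul_eq_mul (a := S.card), ← Finset.sum_const,
      ← Finset.sum_add_distrib]
    refine Finset.sum_le_sum fun x _ => ?_
    rw [← smul_eq_mul, ← Finset.sum_const, ← Finset.sum_add_distrib]
    refine Finset.sum_le_sum fun y _ => ?_
    rw [SimpleGraph.dist_comm (u := w) (v := x)]
    exact hG.dist_triangle
  have hy : ∑ x ∈ T, ∑ y ∈ S, G.dist x y = ∑ x ∈ S, ∑ y ∈ T, G.dist x y := by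
    rw [Finset.sum_comm]
    exact Finset.sum_congr rfl fun x _ => Finset.sum_congr rfl fun y _ => SimpleGraph.dist_comm
  rw [Finset.sum_union hST]
  simp_rw [Finset.sum_union hST]
  rw [Finset.sum_add_distrib, Finset.sum_add_distrib, hy]
  omega

/-- Bounds on the transmission of `w` into `B` and on the sum of all distances within
`B \ {w}`; the negative contribution of the former to the latter is kept. -/
lemma Bic.sum_erase_le [DecidableEq V] {G : SimpleGraph V} (hG : G.Connected) {B : Finset V}
    (h : Bic G (B : Set V)) {w : V} (hw : w ∈ B) :
    ∑ y ∈ B.erase w, G.dist w y ≤ B.card * B.card / 4 ∧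
    ∑ x ∈ B.erase w, ∑ y ∈ B.erase w, G.dist x y + ∑ y ∈ B.erase w, G.dist w y
      ≤ (B.card - 1) * (B.card * B.card / 4) := by
  constructor
  · exact (Finset.sum_le_sum_of_subset (Finset.erase_subset w B)).trans (h.sum_dist_le hG hw)
  · rw [← Finset.sum_add_distrib, ← Finset.card_erase_of_mem hw, ← smul_eq_mul,
      ← Finset.sum_const]
    refine Finset.sum_le_sum fun x hx => ?_
    rw [SimpleGraph.dist_comm, Finset.sum_erase_add _ _ hw]
    exact h.sum_dist_le hG (Finset.mem_of_mem_erase hx)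

/-! ### Pendant blocks of maximal graphs -/

/-- `G` has the largest Wiener index among the connected graphs with as many cut vertices. -/
def IsMaximal [Fintype V] (G : SimpleGraph V) : Prop :=
  ∀ H : SimpleGraph V, H.Connected → cutVertexCount H = cutVertexCount G →
    wienerIndex H ≤ wienerIndex G

/-- Combines the distance bounds of two blocks of sizes `a` and `b`; all coefficients of `da` and
`db` are nonnegative, so these may be replaced by their maxima `fa` and `fb`. -/
lemma merge_bound {a b t fa fb da db IA IB I : ℕ} (ha : 3 ≤ a) (hb : 2 ≤ b) (ht : 1 ≤ t)
    (a1 : da ≤ fa) (b1 : db ≤ fb) (a2 : IA + da ≤ (a - 1) * fa) (b2 : IB + db ≤ (b - 1) * fb)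
    (hI : I ≤ IA + IB + 2 * ((b - 1) * da + (a - 1) * db)) :
    2 * t * (da + db) + I + 2 ≤ 2 * t * (fa + fb) + (a - 2) * fa + (b - 2) * fb
      + 2 * ((b - 1) * fa + (a - 1) * fb) + 2 := by
  obtain ⟨a, rfl⟩ : ∃ c, a = c + 3 := ⟨a - 3, by omega⟩
  obtain ⟨b, rfl⟩ : ∃ c, b = c + 2 := ⟨b - 2, by omega⟩
  obtain ⟨t, rfl⟩ : ∃ c, t = c + 1 := ⟨t - 1, by omega⟩
  simp only [show a + 3 - 1 = a + 2 by omega, show b + 2 - 1 = b + 1 by omega,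
    show a + 3 - 2 = a + 1 by omega, show b + 2 - 2 = b by omega] at *
  have k1 := Nat.mul_le_mul_left (2 * b + 3 + 2 * t) a1
  have k2 := Nat.mul_le_mul_left (2 * a + 5 + 2 * t) b1
  linarith

/-- In a maximal graph, two pendant blocks at `w`, one of which has at least three vertices,
make up the whole graph: otherwise merging them into one cycle would increase the Wiener
index. -/
lemma no_large_pair [Fintype V] [DecidableEq V] (hV : 7 ≤ Fintype.card V) {G : SimpleGraph V}
    (hG : G.Connected) (hmax : IsMaximal G) {w : V} (hcw : IsCutVertex G w) {A B : Finset V}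
    (hA : IsPendantBlock G (A : Set V)) (hB : IsPendantBlock G (B : Set V)) (hwA : w ∈ A)
    (hwB : w ∈ B) (hne : (A : Set V) ≠ B) {z : V} (hzA : z ∉ A) (hzB : z ∉ B) : A.card < 3 := by
  by_contra hcard
  push Not at hcard
  have hB2 : 2 ≤ B.card := by have := hB.1.1; rwa [Set.ncard_coe_finset] at this
  have hdis : Disjoint (A.erase w) (B.erase w) := by
    have := hA.disjoint hB hwA hwB hcw hne
    rw [← Finset.disjoint_coe]
    simpa using this
  have hAc := Finset.card_erase_of_mem hwA
  have hBc := Finset.card_erase_of_mem hwB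
  set S := A.erase w ∪ B.erase w with hS
  have hSc : S.card = (A.card - 1) + (B.card - 1) := by
    rw [hS, Finset.card_union_of_disjoint hdis, hAc, hBc]
  have hSC : Sᶜ.card + S.card = Fintype.card V := by
    rw [add_comm]; exact Finset.card_add_card_compl S
  have hgate : Gated G w (S : Set V) := by
    have := (hA.gated hwA hcw).union (hB.gated hwB hcw)
    rw [hS]
    simpa using this
  have hnc : ∀ x ∈ S, ¬ IsCutVertex G x := by
    intro x hx
    rw [hS, Finset.mem_union, Finset.mem_erase, Finset.mem_erase] at hx
    rcases hx with hx | hx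
    · exact hA.not_cut hwA hcw hx.2 hx.1
    · exact hB.not_cut hwB hcw hx.2 hx.1
  have hzS : z ∉ S := by simp [hS, hzA, hzB]
  have hzw : z ≠ w := by rintro rfl; exact hzA hwA
  have ht : 2 ≤ Sᶜ.card := by
    have : ({z, w} : Finset V) ⊆ Sᶜ := by
      intro x hx
      rw [Finset.mem_insert, Finset.mem_singleton] at hx
      rw [Finset.mem_compl]
      rcases hx with rfl | rfl
      · exact hzS
      · exact hgate.1
    rw [← Finset.card_pair hzw]
    exact Finset.card_le_card this
  obtain ⟨a1, a2⟩ := hA.1.bic.sum_erase_le hG hwA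
  obtain ⟨b1, b2⟩ := hB.1.bic.sum_erase_le hG hwB
  have hun := sum_dist_union_le hG w hdis
  have hgain := gain_two A.card B.card Sᶜ.card hcard hB2 ht (by omega)
  obtain ⟨H, h1, h2, h3⟩ := exists_improvement hG hgate (by omega) hnc hzS hzw (by
    rw [hAc, hBc] at hun
    have hw1 : ∑ y ∈ S, G.dist w y = ∑ y ∈ A.erase w, G.dist w y + ∑ y ∈ B.erase w, G.dist w y :=
      Finset.sum_union hdis
    rw [hw1, show S.card + 1 = A.card + B.card - 1 by omega,
      show S.card - 1 = A.card + B.card - 3 by omega]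
    refine le_trans ?_ hgain
    exact merge_bound hcard hB2 (by omega) a1 b1 a2 b2 hun)
  exact absurd (hmax H h1 h2) (by omega)

/-- In a maximal graph no three pendant edges share a vertex `w`: otherwise the three leaves
and `w` could be rearranged into a 4-cycle. -/
lemma no_three_leaves [Fintype V] [DecidableEq V] (hV : 7 ≤ Fintype.card V) {G : SimpleGraph V}
    (hG : G.Connected) (hmax : IsMaximal G) {w : V} {S : Finset V}
    (hg : Gated G w (S : Set V)) (hS : S.card = 3) (hd : ∀ x ∈ S, G.dist w x ≤ 1)
    (hnc : ∀ x ∈ S, ¬ IsCutVertex G x) : False := by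
  have hSC : S.card + Sᶜ.card = Fintype.card V := Finset.card_add_card_compl S
  obtain ⟨z, hz, hzw⟩ := Finset.exists_mem_ne (s := Sᶜ) (by omega) w
  have h1 : ∑ y ∈ S, G.dist w y ≤ 3 := by
    have := Finset.sum_le_card_nsmul S _ 1 hd
    simpa [hS] using this
  have h2 : ∑ x ∈ S, ∑ y ∈ S, G.dist x y ≤ 12 := by
    have : ∀ x ∈ S, ∑ y ∈ S, G.dist x y ≤ 4 := by
      intro x hx
      rw [← Finset.sum_erase S (SimpleGraph.dist_self (G := G) (v := x))]
      have := Finset.sum_le_card_nsmul (S.erase x) (fun y => G.dist x y) 2 (fun y hy => by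
        have t1 := hG.dist_triangle (u := x) (v := w) (w := y)
        have t2 := hd x hx
        have t3 := hd y (Finset.mem_of_mem_erase hy)
        rw [SimpleGraph.dist_comm] at t2
        omega)
      simpa [Finset.card_erase_of_mem hx, hS] using this
    have := Finset.sum_le_card_nsmul S _ 4 this
    simpa [hS] using this
  obtain ⟨H, e1, e2, e3⟩ := exists_improvement hG hg (by omega) hnc (Finset.mem_compl.1 hz) hzw (by
    rw [hS]
    norm_num
    have := Nat.mul_le_mul_left (2 * Sᶜ.card) h1
    omega)
  exact absurd (hmax H e1 e2) (by omega)

/-- In a graph maximizing the Wiener index among connected graphs on `n ≥ 7`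
vertices with exactly `k` cut vertices (`1 ≤ k ≤ n-3`), every cut vertex lies
in at most two pendant blocks; and for `k ≥ 2`, if a cut vertex lies in two
pendant blocks then both are `K₂`. -/
theorem stmt14 (n k : ℕ) (hn : 7 ≤ n) (hk : 1 ≤ k) (hkn : k ≤ n - 3)
    (G : SimpleGraph (Fin n)) (hG : G.Connected) (hcut : cutVertexCount G = k)
    (hmax : ∀ H : SimpleGraph (Fin n), H.Connected → cutVertexCount H = k →
      wienerIndex H ≤ wienerIndex G) :
    (∀ w : Fin n, IsCutVertex G w →
      {B : Set (Fin n) | IsPendantBlock G B ∧ w ∈ B}.ncard ≤ 2) ∧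
    (2 ≤ k → ∀ w : Fin n, IsCutVertex G w →
      ∀ B₁ B₂ : Set (Fin n), B₁ ≠ B₂ →
        IsPendantBlock G B₁ → w ∈ B₁ → IsPendantBlock G B₂ → w ∈ B₂ →
        B₁.ncard = 2 ∧ B₂.ncard = 2) := by
  classical
  have hmax' : IsMaximal G := fun H h1 h2 => hmax H h1 (h2.trans hcut)
  have hV : 7 ≤ Fintype.card (Fin n) := by simpa using hn
  -- two pendant blocks at `w` that do not exhaust `G` are edges
  have pair : ∀ w, IsCutVertex G w → ∀ A B : Set (Fin n), A ≠ B → IsPendantBlock G A → w ∈ A →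
      IsPendantBlock G B → w ∈ B → ∀ z, z ∉ A → z ∉ B → A.ncard = 2 := by
    intro w hcw A B hne hA hwA hB hwB z hzA hzB
    have hA2 := hA.1.1
    have := no_large_pair hV hG hmax' hcw (A := A.toFinset) (B := B.toFinset) (z := z) (w := w)
      (by simpa using hA) (by simpa using hB) (by simpa using hwA) (by simpa using hwB)
      (by simpa using hne) (by simpa using hzA) (by simpa using hzB)
    rw [← Set.ncard_eq_toFinset_card'] at this
    omega
  constructor
  · intro w hcw
    by_contra hlt
    push Not at hlt
    obtain ⟨A, B, C, ⟨hA, hwA⟩, ⟨hB, hwB⟩, ⟨hC, hwC⟩, hAB, hAC, hBC⟩ :=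
      (Set.two_lt_ncard_iff (Set.toFinite _)).1 hlt
    -- each of the three blocks is an edge `w u`, the other two witnessing that it is not all
    have edge : ∀ A B C : Set (Fin n), A ≠ B → A ≠ C → B ≠ C → IsPendantBlock G A → w ∈ A →
        IsPendantBlock G B → w ∈ B → IsPendantBlock G C → w ∈ C →
        ∃ u, A \ {w} = {u} ∧ G.dist w u ≤ 1 := by
      intro A B C hAB hAC hBC hA hwA hB hwB hC hwC
      obtain ⟨z, hz, hzw⟩ := hC.1.nontrivial.exists_ne w
      have h1 := Set.disjoint_left.1 (hC.disjoint hA hwC hwA hcw hAC.symm) ⟨hz, hzw⟩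
      have h2 := Set.disjoint_left.1 (hC.disjoint hB hwC hwB hcw hBC.symm) ⟨hz, hzw⟩
      have hc := pair w hcw A B hAB hA hwA hB hwB z (fun h => h1 ⟨h, hzw⟩) (fun h => h2 ⟨h, hzw⟩)
      have hc1 : (A \ {w}).ncard = 1 := by
        rw [Set.ncard_sdiff_singleton_of_mem hwA, hc]
      obtain ⟨u, hu⟩ := Set.ncard_eq_one.1 hc1
      have huA : u ∈ A := (hu ▸ Set.mem_singleton u : u ∈ A \ {w}).1
      refine ⟨u, hu, ?_⟩
      have hbic : Bic G ((A.toFinset : Finset (Fin n)) : Set (Fin n)) := by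
        simpa using hA.1.bic
      have := hbic.sum_dist_le hG (v := w) (by simpa using hwA)
      rw [← Set.ncard_eq_toFinset_card', hc] at this
      exact (Finset.single_le_sum (f := fun u => G.dist w u) (fun _ _ => Nat.zero_le _)
        (by simpa using huA)).trans this
    obtain ⟨u₁, hu₁, hd₁⟩ := edge A B C hAB hAC hBC hA hwA hB hwB hC hwC
    obtain ⟨u₂, hu₂, hd₂⟩ := edge B A C hAB.symm hBC hAC hB hwB hA hwA hC hwC
    obtain ⟨u₃, hu₃, hd₃⟩ := edge C A B hAC.symm hBC.symm hAB hC hwC hA hwA hB hwB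
    have d₁₂ := hA.disjoint hB hwA hwB hcw hAB
    have d₁₃ := hA.disjoint hC hwA hwC hcw hAC
    have d₂₃ := hB.disjoint hC hwB hwC hcw hBC
    rw [hu₁, hu₂, Set.disjoint_singleton] at d₁₂
    rw [hu₁, hu₃, Set.disjoint_singleton] at d₁₃
    rw [hu₂, hu₃, Set.disjoint_singleton] at d₂₃
    have hg := ((hA.gated hwA hcw).union (hB.gated hwB hcw)).union (hC.gated hwC hcw)
    have hcA := fun x (hx : x ∈ A \ {w}) => hA.not_cut hwA hcw hx.1 hx.2
    have hcB := fun x (hx : x ∈ B \ {w}) => hB.not_cut hwB hcw hx.1 hx.2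
    have hcC := fun x (hx : x ∈ C \ {w}) => hC.not_cut hwC hcw hx.1 hx.2
    rw [hu₁] at hg hcA
    rw [hu₂] at hg hcB
    rw [hu₃] at hg hcC
    refine no_three_leaves hV hG hmax' (w := w) (S := {u₁, u₂, u₃}) ?_
      (Finset.card_eq_three.2 ⟨_, _, _, d₁₂, d₁₃, d₂₃, rfl⟩) ?_ ?_
    · convert hg using 1
      ext x
      simp
      tauto
    · simp [hd₁, hd₂, hd₃]
    · intro x hx
      simp only [Finset.mem_insert, Finset.mem_singleton] at hx
      rcases hx with rfl | rfl | rfl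
      · exact hcA _ rfl
      · exact hcB _ rfl
      · exact hcC _ rfl
  · intro hk2 w hcw A B hne hA hwA hB hwB
    -- a second cut vertex lies outside both blocks
    obtain ⟨x, hx, hxw⟩ : ∃ x, IsCutVertex G x ∧ x ≠ w := by
      have h1 : 1 < {v | IsCutVertex G v}.ncard := by
        unfold cutVertexCount at hcut
        omega
      obtain ⟨x, hx, hxw⟩ :=
        ((Set.one_lt_ncard_iff_nontrivial_and_finite.1 h1).1).exists_ne w
      exact ⟨x, hx, hxw⟩
    have hxA : x ∉ A := fun h => hA.not_cut hwA hcw h hxw hx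
    have hxB : x ∉ B := fun h => hB.not_cut hwB hcw h hxw hx
    exact ⟨pair w hcw A B hne hA hwA hB hwB x hxA hxB,
      pair w hcw B A hne.symm hB hwB hA hwA x hxB hxA⟩
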